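/- There exists a constant c > 0 such that for every integer N ≥ 16, the number of integers b with 1 ≤ b ≤ N satisfying |ω(b) − log log N| > (log log N)^{3/4} is at most 2·N·exp(−c·√(log log N)). -/

import Mathlib

/-!
The proof is the exponential moment method. For `0 < z ≤ 2` one shows, with an absolute `K`,
`∑_{n ≤ N} z ^ ω(n) ≤ K * N * (log N) ^ (z - 1)` (`exists_sum_pow_omega_le`). With `L = log log N`,
taking `z = exp (± t)` for `t = L ^ (-1/4) / 2` and applying Markov's inequality to the upper and
the lower tail gives the bound `2 * K * N * exp (-√L / 4)`. The factor `K` is absorbed by making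
the constant in the exponent smaller, the trivial bound `N` being enough while `√L` is bounded.

The moment bound has two ingredients.
* `sum_powOmega_mul_log_le`: writing `log n = ∑_{d ∣ n} Λ(d)` and using Chebyshev's bound
  `ψ(x) = O(x)`, one gets `log N * ∑_{n ≤ N} z ^ ω(n) = O(N * ∑_{n ≤ N} z ^ ω(n) / n)`.
* `sum_powOmega_div_le`: Rankin's trick with exponent `s = 1 + 1 / log N` and a partial Euler product
  bound the last sum by `O((log N) ^ z)`, since `∑_{p ≤ N} p ^ (-s) ≤ log ζ(s) ≤ log (1 + log N)`.
-/

/-! ### The multiplicative function `z ^ ω(n)` -/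

/-- The multiplicative function `n ↦ z ^ ω(n)`, as an arithmetic function (so its value at `0`
is `0`). -/
noncomputable def powOmega (z : ℝ) : ArithmeticFunction ℝ :=
  ⟨fun n => if n = 0 then 0 else z ^ n.primeFactors.card, by simp⟩

lemma powOmega_apply (z : ℝ) {n : ℕ} (hn : n ≠ 0) : powOmega z n = z ^ n.primeFactors.card := by
  simp [powOmega, hn]

lemma powOmega_nonneg {z : ℝ} (hz : 0 ≤ z) (n : ℕ) : 0 ≤ powOmega z n := by
  by_cases hn : n = 0
  · simp [hn]
  · rw [powOmega_apply z hn]; positivity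

lemma powOmega_mul (z : ℝ) {m n : ℕ} (h : m.Coprime n) :
    powOmega z (m * n) = powOmega z m * powOmega z n := by
  by_cases hm : m = 0
  · simp [hm]
  by_cases hn : n = 0
  · simp [hn]
  rw [powOmega_apply z hm, powOmega_apply z hn, powOmega_apply z (mul_ne_zero hm hn),
    h.primeFactors_mul, Finset.card_union_of_disjoint h.disjoint_primeFactors, pow_add]

lemma powOmega_mul_isPrimePow {z : ℝ} (hz : 0 < z) {m q : ℕ} (hm : m ≠ 0) (hq : IsPrimePow q) :
    powOmega z (m * q) ≤ max 1 z * powOmega z m := by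
  have hq0 : q ≠ 0 := hq.ne_zero
  rw [powOmega_apply z hm, powOmega_apply z (mul_ne_zero hm hq0), Nat.primeFactors_mul hm hq0]
  obtain ⟨p, hp⟩ := Finset.card_eq_one.mp (isPrimePow_iff_card_primeFactors_eq_one.mp hq)
  rw [hp]
  have hpos : 0 < z ^ m.primeFactors.card := by positivity
  by_cases h : p ∈ m.primeFactors
  · rw [Finset.union_eq_left.mpr (by simpa using h)]
    exact le_mul_of_one_le_left hpos.le (le_max_left _ _)
  · rw [Finset.card_union_of_disjoint (by simpa using h), Finset.card_singleton, pow_succ, mul_comm]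
    gcongr
    exact le_max_right _ _

/-! ### Reduction to logarithmic means -/

/-- In `log n = ∑_{q ∣ n} Λ(q)` only prime powers `q` contribute, and multiplying `n / q` by a prime
power changes `z ^ ω` by a factor at most `max 1 z`. -/
lemma powOmega_mul_log_le {z : ℝ} (hz : 0 < z) {n : ℕ} (hn : n ≠ 0) :
    powOmega z n * Real.log n ≤
      max 1 z * (powOmega z * ArithmeticFunction.vonMangoldt) n := by
  rw [← ArithmeticFunction.vonMangoldt_sum, ArithmeticFunction.mul_apply, Finset.mul_sum,
    Finset.mul_sum,
    Nat.sum_divisorsAntidiagonal' (f := fun a b => max 1 z *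
      (powOmega z a * ArithmeticFunction.vonMangoldt b))]
  refine Finset.sum_le_sum fun q hq => ?_
  have hdvd := Nat.dvd_of_mem_divisors hq
  by_cases hpp : IsPrimePow q
  · have h0 : n / q ≠ 0 := by
      rw [Nat.div_ne_zero_iff]
      exact ⟨hpp.ne_zero, Nat.le_of_dvd (Nat.pos_of_ne_zero hn) hdvd⟩
    have := powOmega_mul_isPrimePow hz h0 hpp
    rw [Nat.div_mul_cancel hdvd] at this
    rw [← mul_assoc]
    exact mul_le_mul_of_nonneg_right this ArithmeticFunction.vonMangoldt_nonneg
  · simp [ArithmeticFunction.vonMangoldt_eq_zero_iff.mpr hpp]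

/-- The sum of `z ^ ω(n)` over `n ≤ N` is `O(N / log N)` times the sum of `z ^ ω(n) / n`: split
`log N = log n + log (N / n)`, use Chebyshev's bound for the first term and `log y ≤ y` for the
second. -/
lemma sum_powOmega_mul_log_le {z : ℝ} (hz : 0 < z) (hz2 : z ≤ 2) (N : ℕ) :
    Real.log N * ∑ n ∈ Finset.Ioc 0 N, powOmega z n ≤
      (2 * (Real.log 4 + 4) + 1) * N * ∑ n ∈ Finset.Ioc 0 N, powOmega z n / n := by
  have h1 : ∑ n ∈ Finset.Ioc 0 N, powOmega z n * Real.log n ≤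
      2 * (Real.log 4 + 4) * N * ∑ n ∈ Finset.Ioc 0 N, powOmega z n / n := by
    calc ∑ n ∈ Finset.Ioc 0 N, powOmega z n * Real.log n
        ≤ ∑ n ∈ Finset.Ioc 0 N, max 1 z * (powOmega z * ArithmeticFunction.vonMangoldt) n :=
          Finset.sum_le_sum fun n hn =>
            powOmega_mul_log_le hz (Finset.mem_Ioc.mp hn).1.ne'
      _ = max 1 z * ∑ n ∈ Finset.Ioc 0 N, powOmega z n *
            ∑ m ∈ Finset.Ioc 0 (N / n), ArithmeticFunction.vonMangoldt m := by
          rw [← Finset.mul_sum, ArithmeticFunction.sum_Ioc_mul_eq_sum_sum]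
      _ ≤ 2 * ∑ n ∈ Finset.Ioc 0 N, powOmega z n * ((Real.log 4 + 4) * (N / n)) := by
          gcongr with n hn
          · exact Finset.sum_nonneg fun n _ => mul_nonneg (powOmega_nonneg hz.le n)
              (Finset.sum_nonneg fun m _ => ArithmeticFunction.vonMangoldt_nonneg)
          · exact max_le (by norm_num) hz2
          · exact powOmega_nonneg hz.le n
          · have := Chebyshev.psi_le_const_mul_self (x := (N : ℝ) / n) (by positivity)
            rwa [Chebyshev.psi, Nat.floor_div_natCast, Nat.floor_natCast] at this
      _ = _ := by
          rw [Finset.mul_sum, Finset.mul_sum]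
          exact Finset.sum_congr rfl fun n _ => by ring
  have h2 : ∑ n ∈ Finset.Ioc 0 N, powOmega z n * (Real.log N - Real.log n) ≤
      N * ∑ n ∈ Finset.Ioc 0 N, powOmega z n / n := by
    rw [Finset.mul_sum]
    refine Finset.sum_le_sum fun n hn => ?_
    obtain ⟨hn0, hnN⟩ := Finset.mem_Ioc.mp hn
    have hn' : (0 : ℝ) < n := by exact_mod_cast hn0
    have hN' : (0 : ℝ) < N := by exact_mod_cast hn0.trans_le hnN
    rw [← Real.log_div hN'.ne' hn'.ne', mul_div_left_comm]
    exact mul_le_mul_of_nonneg_left (Real.log_le_self (by positivity)) (powOmega_nonneg hz.le n)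
  calc _ = ∑ n ∈ Finset.Ioc 0 N, powOmega z n * Real.log n +
        ∑ n ∈ Finset.Ioc 0 N, powOmega z n * (Real.log N - Real.log n) := by
        rw [← Finset.sum_add_distrib, Finset.mul_sum]
        exact Finset.sum_congr rfl fun n _ => by ring
    _ ≤ _ := by linarith

/-! ### Bounding the logarithmic mean by an Euler product -/

/-- `ζ(s) ≤ 1 + 1 / (s - 1)`. -/
lemma tsum_rpow_le {s : ℝ} (hs : 1 < s) :
    ∑' n : ℕ, (n : ℝ) ^ (-s) ≤ 1 + 1 / (s - 1) := by
  have hsum : Summable fun n : ℕ => (n : ℝ) ^ (-s) := Real.summable_nat_rpow.mpr (by linarith)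
  have h := ZetaAsymptotics.zeta_limit_aux1 hs
  have h' : 0 ≤ s * ZetaAsymptotics.termTSum s :=
    mul_nonneg (by linarith) (tsum_nonneg fun n => ZetaAsymptotics.term_nonneg _ _)
  rw [hsum.tsum_eq_zero_add, Nat.cast_zero, Real.zero_rpow (by linarith), zero_add]
  have : ∑' n : ℕ, ((n + 1 : ℕ) : ℝ) ^ (-s) = ∑' n : ℕ, 1 / (n + 1 : ℝ) ^ s := by
    congr 1; ext n
    rw [Real.rpow_neg (by positivity)]; simp
  rw [this]; linarith

lemma prime_rpow_neg_le {s : ℝ} (hs : 1 < s) {p : ℕ} (hp : p.Prime) :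
    (p : ℝ) ^ (-s) ≤ (p : ℝ)⁻¹ := by
  rw [← Real.rpow_neg_one]
  exact Real.rpow_le_rpow_of_exponent_le (by exact_mod_cast hp.one_lt.le) (by linarith)

lemma prime_rpow_neg_le_half {s : ℝ} (hs : 1 < s) {p : ℕ} (hp : p.Prime) :
    (p : ℝ) ^ (-s) ≤ 1 / 2 := by
  refine (prime_rpow_neg_le hs hp).trans ?_
  rw [one_div]
  exact inv_anti₀ (by norm_num) (by exact_mod_cast hp.two_le)

/-- The Euler product of `ζ` gives `∑ p ^ (-s) ≤ log ζ(s)`. -/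
lemma sum_primes_rpow_le {s : ℝ} (hs : 1 < s) (N : ℕ) :
    ∑ p ∈ N.primesBelow, (p : ℝ) ^ (-s) ≤ Real.log (1 + 1 / (s - 1)) := by
  have hsum : Summable fun n : ℕ => (n : ℝ) ^ (-s) := Real.summable_nat_rpow.mpr (by linarith)
  let f : ℕ →* ℝ :=
    { toFun := fun n => (n : ℝ) ^ (-s)
      map_one' := by simp
      map_mul' := fun m n => by
        push_cast
        exact Real.mul_rpow (by positivity) (by positivity) }
  have h := EulerProduct.prod_primesBelow_geometric_eq_tsum_smoothNumbers (f := f) hsum N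
  have h1 : ∑' m : N.smoothNumbers, f m ≤ ∑' n : ℕ, (n : ℝ) ^ (-s) :=
    hsum.tsum_subtype_le _ _ fun n => Real.rpow_nonneg (Nat.cast_nonneg n) _
  rw [Real.le_log_iff_exp_le (by have : 0 < s - 1 := by linarith
                                 positivity), Real.exp_sum]
  refine le_trans ?_ (h ▸ h1 |>.trans (tsum_rpow_le hs))
  refine Finset.prod_le_prod (fun p _ => by positivity) fun p hp => ?_
  have hp' := Nat.prime_of_mem_primesBelow hp
  have h2 := prime_rpow_neg_le_half hs hp'
  change Real.exp ((p : ℝ) ^ (-s)) ≤ (1 - (p : ℝ) ^ (-s))⁻¹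
  rw [le_inv_comm₀ (Real.exp_pos _) (by linarith), ← Real.exp_neg]
  linarith [Real.add_one_le_exp (-(p : ℝ) ^ (-s))]

/-- The Euler factor `1 + z / (p ^ s - 1)` of `∑ z ^ ω(n) * n ^ (-s)`. -/
lemma hasSum_powOmega_prime_pow (z : ℝ) {s : ℝ} (hs : 1 < s) {p : ℕ} (hp : p.Prime) :
    HasSum (fun e : ℕ => powOmega z (p ^ e) * ((p ^ e : ℕ) : ℝ) ^ (-s))
      (1 + z * ((p : ℝ) ^ (-s) * (1 - (p : ℝ) ^ (-s))⁻¹)) := by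
  have hu := prime_rpow_neg_le_half hs hp
  have hu0 : 0 ≤ (p : ℝ) ^ (-s) := by positivity
  have hpow (e : ℕ) : ((p ^ e : ℕ) : ℝ) ^ (-s) = ((p : ℝ) ^ (-s)) ^ e := by
    rw [Nat.cast_pow, ← Real.rpow_natCast, ← Real.rpow_natCast, ← Real.rpow_mul (by positivity),
      ← Real.rpow_mul (by positivity), mul_comm]
  have hg := (hasSum_geometric_of_lt_one hu0 (by linarith)).mul_left (z * (p : ℝ) ^ (-s))
  rw [← mul_assoc, add_comm]
  refine (hasSum_nat_add_iff' 1).mp ?_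
  convert! hg using 1
  · ext e
    rw [powOmega_apply z (pow_ne_zero _ hp.ne_zero), Nat.primeFactors_prime_pow (by simp) hp,
      hpow, pow_succ']
    simp [mul_assoc]
  · simp [powOmega_apply]

/-- The logarithmic mean of `z ^ ω(n)` is `O((log N) ^ z)`: by Rankin's trick `1 / n` is at most
`e * n ^ (-s)` for `n ≤ N` and `s = 1 + 1 / log N`, and the resulting sum is at most the partial
Euler product `∏ (1 + z / (p ^ s - 1))`. -/
lemma sum_powOmega_div_le {z : ℝ} (hz : 0 < z) {N : ℕ} (hN : 3 ≤ N) :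
    ∑ n ∈ Finset.Ioc 0 N, powOmega z n / n ≤
      Real.exp 1 * Real.exp (z * (Real.log (1 + Real.log N) + 2)) := by
  have hlog : 0 < Real.log N := Real.log_pos (by exact_mod_cast (by omega : 1 < N))
  set s : ℝ := 1 + 1 / Real.log N with hsdef
  have hs : 1 < s := by rw [hsdef]; linarith [one_div_pos.mpr hlog]
  have hs1 : 1 / (s - 1) = Real.log N := by simp [hsdef]
  let f : ℕ → ℝ := fun n => powOmega z n * (n : ℝ) ^ (-s)
  have hf0 (n : ℕ) : 0 ≤ f n := mul_nonneg (powOmega_nonneg hz.le n) (by positivity)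
  have hf1 : f 1 = 1 := by simp [f, powOmega_apply]
  have hfm {m n : ℕ} (h : m.Coprime n) : f (m * n) = f m * f n := by
    simp only [f, powOmega_mul z h, Nat.cast_mul]
    rw [Real.mul_rpow (by positivity) (by positivity)]
    ring
  have hloc {p : ℕ} (hp : p.Prime) := hasSum_powOmega_prime_pow z hs hp
  obtain ⟨hsm, hprod⟩ := EulerProduct.summable_and_hasSum_smoothNumbers_prod_primesBelow_tsum
    hf1 hfm (fun hp => (hloc hp).summable.norm) (N + 1)
  have hrankin : ∑ n ∈ Finset.Ioc 0 N, powOmega z n / n ≤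
      Real.exp 1 * ∑ n ∈ Finset.Ioc 0 N, f n := by
    rw [Finset.mul_sum]
    refine Finset.sum_le_sum fun n hn => ?_
    obtain ⟨hn0, hnN⟩ := Finset.mem_Ioc.mp hn
    have hn' : (0 : ℝ) < n := by exact_mod_cast hn0
    have hle : Real.log n ≤ Real.log N := Real.log_le_log hn' (by exact_mod_cast hnN)
    have : (n : ℝ)⁻¹ ≤ Real.exp 1 * (n : ℝ) ^ (-s) := by
      rw [← Real.exp_log hn', ← Real.exp_neg, ← Real.exp_mul, ← Real.exp_add, Real.exp_le_exp]
      have : Real.log n * (1 / Real.log N) ≤ 1 := by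
        rw [mul_one_div]; exact div_le_one_of_le₀ hle hlog.le
      rw [hsdef]; linarith
    rw [div_eq_mul_inv]
    calc _ ≤ powOmega z n * (Real.exp 1 * (n : ℝ) ^ (-s)) :=
          mul_le_mul_of_nonneg_left this (powOmega_nonneg hz.le n)
      _ = _ := by simp only [f]; ring
  have hsmooth : ∑ n ∈ Finset.Ioc 0 N, f n ≤
      ∏ p ∈ (N + 1).primesBelow, ∑' e : ℕ, f (p ^ e) := by
    rw [← hprod.tsum_eq]
    have hmem (n : ℕ) (hn : n ∈ Finset.Ioc 0 N) : n ∈ (N + 1).smoothNumbers := by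
      obtain ⟨hn0, hnN⟩ := Finset.mem_Ioc.mp hn
      exact Nat.mem_smoothNumbers_of_lt hn0 (by omega)
    rw [← Finset.sum_subtype_of_mem f hmem]
    exact hprod.summable.sum_le_tsum _ fun n _ => hf0 n
  have hsq : ∑ p ∈ (N + 1).primesBelow, (((p : ℝ) ^ 2)⁻¹) ≤ 1 := by
    calc _ ≤ ∑ i ∈ Finset.Ioo 1 (N + 1), (((i : ℝ) ^ 2)⁻¹) := by
          refine Finset.sum_le_sum_of_subset_of_nonneg (fun p hp => ?_) fun _ _ _ => by positivity
          rw [Nat.mem_primesBelow] at hp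
          exact Finset.mem_Ioo.mpr ⟨hp.2.one_lt, hp.1⟩
      _ ≤ 2 / ((1 : ℕ) + 1) := sum_Ioo_inv_sq_le 1 (N + 1)
      _ = 1 := by norm_num
  have hexp : ∏ p ∈ (N + 1).primesBelow, ∑' e : ℕ, f (p ^ e) ≤
      Real.exp (z * (Real.log (1 + Real.log N) + 2)) := by
    calc _ ≤ ∏ p ∈ (N + 1).primesBelow,
            Real.exp (z * ((p : ℝ) ^ (-s) + 2 * ((p : ℝ) ^ 2)⁻¹)) := by
          refine Finset.prod_le_prod (fun p _ => tsum_nonneg fun e => hf0 _) fun p hp => ?_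
          have hp' := Nat.prime_of_mem_primesBelow hp
          have hu := prime_rpow_neg_le_half hs hp'
          have hu1 := prime_rpow_neg_le hs hp'
          have hu0 : 0 ≤ (p : ℝ) ^ (-s) := by positivity
          rw [(hloc hp').tsum_eq]
          set u := (p : ℝ) ^ (-s)
          -- For `0 ≤ u ≤ 1 / 2`, `u / (1 - u) ≤ u + 2 * u ^ 2`.
          have h1 : u * (1 - u)⁻¹ ≤ u + 2 * u ^ 2 := by
            rw [← div_eq_mul_inv, div_le_iff₀ (by linarith)]
            nlinarith [mul_nonneg (sq_nonneg u) (by linarith : 0 ≤ 1 - 2 * u)]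
          have h2 : u ^ 2 ≤ ((p : ℝ) ^ 2)⁻¹ := by
            rw [← inv_pow]; gcongr
          have h3 : z * (u * (1 - u)⁻¹) ≤ z * (u + 2 * ((p : ℝ) ^ 2)⁻¹) :=
            mul_le_mul_of_nonneg_left (by linarith) hz.le
          linarith [Real.add_one_le_exp (z * (u + 2 * ((p : ℝ) ^ 2)⁻¹))]
      _ = Real.exp (z * (∑ p ∈ (N + 1).primesBelow, (p : ℝ) ^ (-s) +
            2 * ∑ p ∈ (N + 1).primesBelow, (((p : ℝ) ^ 2)⁻¹))) := by
          rw [← Real.exp_sum, ← Finset.mul_sum, Finset.sum_add_distrib, Finset.mul_sum]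
      _ ≤ _ := by
          have := sum_primes_rpow_le hs (N + 1)
          rw [hs1] at this
          gcongr
          linarith
  exact hrankin.trans (mul_le_mul_of_nonneg_left (hsmooth.trans hexp) (Real.exp_pos 1).le)

lemma one_le_log_log {N : ℕ} (hN : 16 ≤ N) : 1 ≤ Real.log (Real.log N) := by
  have h16 : Real.log 16 = 4 * Real.log 2 := by
    rw [show (16 : ℝ) = 2 ^ 4 by norm_num, Real.log_pow]; norm_num
  have h1 : Real.log 16 ≤ Real.log N := Real.log_le_log (by norm_num) (by exact_mod_cast hN)
  have h2 : Real.exp 1 ≤ Real.log N := by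
    linarith [Real.log_two_gt_d9, Real.exp_one_lt_d9]
  exact (Real.le_log_iff_exp_le (lt_of_lt_of_le (Real.exp_pos 1) h2)).mpr h2

/-! ### The moment bound and the tails -/

/-- Mean value bound for `z ^ ω(n)`, uniform in `0 < z ≤ 2`. -/
lemma exists_sum_pow_omega_le : ∃ K : ℝ, 1 ≤ K ∧ ∀ N : ℕ, 16 ≤ N → ∀ z : ℝ, 0 < z → z ≤ 2 →
    ∑ n ∈ Finset.Icc 1 N, z ^ n.primeFactors.card ≤
      K * N * Real.exp ((z - 1) * Real.log (Real.log N)) := by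
  have hl4 : 0 ≤ Real.log 4 := Real.log_nonneg (by norm_num)
  refine ⟨(2 * (Real.log 4 + 4) + 1) * Real.exp 7, ?_, fun N hN z hz hz2 => ?_⟩
  · nlinarith [Real.add_one_le_exp 7]
  set L := Real.log (Real.log N) with hL
  have hL1 : 1 ≤ L := one_le_log_log hN
  have hN1 : (1 : ℝ) < N := by exact_mod_cast (by omega : 1 < N)
  have hlog : 0 < Real.log N := Real.log_pos hN1
  have hLe : Real.exp L = Real.log N := Real.exp_log hlog
  have hlog1 : Real.log (1 + Real.log N) ≤ L + 1 := by
    rw [Real.log_le_iff_le_exp (by positivity), Real.exp_add, hLe]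
    have : 1 ≤ Real.log N := by rw [← hLe]; exact Real.one_le_exp (by linarith)
    nlinarith [Real.add_one_le_exp 1]
  have hsum : ∑ n ∈ Finset.Icc 1 N, z ^ n.primeFactors.card =
      ∑ n ∈ Finset.Ioc 0 N, powOmega z n :=
    Finset.sum_congr (by ext; simp [Nat.succ_le_iff]) fun n hn =>
      (powOmega_apply z (by simp at hn; omega)).symm
  have hS : ∑ n ∈ Finset.Ioc 0 N, powOmega z n / n ≤ Real.exp 7 * Real.exp (z * L) := by
    refine (sum_powOmega_div_le hz (by omega)).trans ?_
    rw [← Real.exp_add, ← Real.exp_add, Real.exp_le_exp]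
    nlinarith
  rw [hsum, sub_mul, one_mul, Real.exp_sub, hLe, ← mul_div_assoc, le_div_iff₀ hlog, mul_comm]
  calc _ ≤ _ := sum_powOmega_mul_log_le hz hz2 N
    _ ≤ (2 * (Real.log 4 + 4) + 1) * N * (Real.exp 7 * Real.exp (z * L)) := by gcongr
    _ = _ := by ring

/-- The two-sided tail bound, with the constant `K` of the moment bound still present. -/
lemma exists_card_tail_le : ∃ K : ℝ, 1 ≤ K ∧ ∀ N : ℕ, 16 ≤ N → ∀ A : Finset ℕ,
    A ⊆ Finset.Icc 1 N →
    (∀ b ∈ A, |(b.primeFactors.card : ℝ) - Real.log (Real.log N)| >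
      Real.log (Real.log N) ^ ((3 : ℝ) / 4)) →
    (A.card : ℝ) ≤ 2 * K * N * Real.exp (-(Real.sqrt (Real.log (Real.log N)) / 4)) := by
  obtain ⟨K, hK1, hK⟩ := exists_sum_pow_omega_le
  refine ⟨K, hK1, fun N hN A hA hdev => ?_⟩
  have hL1 := one_le_log_log hN
  specialize hK N hN
  set L := Real.log (Real.log N)
  have hL0 : 0 ≤ L := by linarith
  set x : ℝ := L ^ ((1 : ℝ) / 4) with hx
  have hx1 : 1 ≤ x := Real.one_le_rpow hL1 (by norm_num)
  have hx4 : x ^ 4 = L := by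
    rw [hx, ← Real.rpow_natCast, ← Real.rpow_mul hL0]; norm_num
  have hx3 : L ^ ((3 : ℝ) / 4) = x ^ 3 := by
    rw [hx, ← Real.rpow_natCast, ← Real.rpow_mul hL0]; norm_num
  have hx2 : Real.sqrt L = x ^ 2 := by
    rw [← hx4, show x ^ 4 = (x ^ 2) ^ 2 by ring]
    exact Real.sqrt_sq (by positivity)
  rw [hx3] at hdev
  rw [hx2]
  -- `t = 1 / (2 * x)` minimises the exponent `t ^ 2 * L - t * x ^ 3`.
  set t : ℝ := 1 / (2 * x) with ht
  have htx : t * x = 1 / 2 := by rw [ht]; field_simp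
  have ht0 : 0 < t := by positivity
  have ht1 : t ≤ 1 / 2 := by nlinarith
  have hopt : t ^ 2 * L - t * x ^ 3 = -(x ^ 2 / 4) := by
    rw [← hx4]
    linear_combination (x ^ 2 * (t * x + 1 / 2) - x ^ 2) * htx
  have hexp2 : Real.exp t ≤ 2 := by
    have := Real.abs_exp_sub_one_sub_id_le (x := t) (by rw [abs_of_pos ht0]; linarith)
    nlinarith [abs_le.mp this]
  have hup := hK (Real.exp t) (Real.exp_pos t) hexp2
  have hlo := hK (Real.exp (-t)) (Real.exp_pos _)
    (by have := Real.exp_le_one_iff.mpr (by linarith : -t ≤ 0); linarith)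
  have hquad (y : ℝ) (hy : |y| ≤ 1) (hyt : y ^ 2 = t ^ 2) :
      Real.exp (-(y * L + t * x ^ 3)) * (K * N * Real.exp ((Real.exp y - 1) * L)) ≤
        K * N * Real.exp (-(x ^ 2 / 4)) := by
    have h := (abs_le.mp (Real.abs_exp_sub_one_sub_id_le hy)).2
    rw [mul_left_comm, ← Real.exp_add]
    gcongr
    rw [← hopt, ← hyt]
    nlinarith
  have hb (b : ℕ) (hbA : b ∈ A) : (1 : ℝ) ≤
      Real.exp (-(t * L + t * x ^ 3)) * Real.exp t ^ b.primeFactors.card +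
      Real.exp (-(-t * L + t * x ^ 3)) * Real.exp (-t) ^ b.primeFactors.card := by
    have := hdev b hbA
    rw [← Real.exp_nat_mul, ← Real.exp_nat_mul, ← Real.exp_add, ← Real.exp_add]
    rcases lt_abs.mp this with h | h
    · refine le_add_of_le_of_nonneg (Real.one_le_exp ?_) (Real.exp_pos _).le
      nlinarith
    · refine le_add_of_nonneg_of_le (Real.exp_pos _).le (Real.one_le_exp ?_)
      nlinarith
  calc (A.card : ℝ) = ∑ b ∈ A, (1 : ℝ) := by simp
    _ ≤ ∑ b ∈ A, (Real.exp (-(t * L + t * x ^ 3)) * Real.exp t ^ b.primeFactors.card +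
      Real.exp (-(-t * L + t * x ^ 3)) * Real.exp (-t) ^ b.primeFactors.card) :=
        Finset.sum_le_sum hb
    _ ≤ ∑ b ∈ Finset.Icc 1 N,
      (Real.exp (-(t * L + t * x ^ 3)) * Real.exp t ^ b.primeFactors.card +
      Real.exp (-(-t * L + t * x ^ 3)) * Real.exp (-t) ^ b.primeFactors.card) :=
        Finset.sum_le_sum_of_subset_of_nonneg hA fun _ _ _ => by positivity
    _ = Real.exp (-(t * L + t * x ^ 3)) *
          ∑ b ∈ Finset.Icc 1 N, Real.exp t ^ b.primeFactors.card +
        Real.exp (-(-t * L + t * x ^ 3)) *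
          ∑ b ∈ Finset.Icc 1 N, Real.exp (-t) ^ b.primeFactors.card := by
        rw [Finset.sum_add_distrib, Finset.mul_sum, Finset.mul_sum]
    _ ≤ K * N * Real.exp (-(x ^ 2 / 4)) + K * N * Real.exp (-(x ^ 2 / 4)) := by
        refine add_le_add ?_ ?_
        · exact (mul_le_mul_of_nonneg_left hup (Real.exp_pos _).le).trans
            (hquad t (by rw [abs_of_pos ht0]; linarith) rfl)
        · exact (mul_le_mul_of_nonneg_left hlo (Real.exp_pos _).le).trans
            (hquad (-t) (by rw [abs_neg, abs_of_pos ht0]; linarith) (by ring))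
    _ = _ := by ring


open scoped Classical in
/-- There is a constant `c > 0` such that for every integer `N ≥ 16`, the number of
integers `1 ≤ b ≤ N` with `|ω(b) − log log N| > (log log N)^(3/4)` is at most
`2·N·exp(−c·√(log log N))`. -/
theorem stmt2 :
    ∃ c : ℝ, 0 < c ∧ ∀ N : ℕ, 16 ≤ N →
      (((Finset.Icc 1 N).filter fun b =>
          |(b.primeFactors.card : ℝ) - Real.log (Real.log N)| >
            (Real.log (Real.log N)) ^ ((3 : ℝ) / 4)).card : ℝ) ≤
        2 * N * Real.exp (-c * Real.sqrt (Real.log (Real.log N))) := by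
  obtain ⟨K, hK1, hK⟩ := exists_card_tail_le
  have hκ : 0 ≤ Real.log K := Real.log_nonneg hK1
  have hKe : Real.exp (Real.log K) = K := Real.exp_log (by linarith)
  have hκ' : 0 < 16 * Real.log K + 16 := by linarith
  refine ⟨1 / (16 * Real.log K + 16), by positivity, fun N hN => ?_⟩
  have hbound := hK N hN _ (Finset.filter_subset _ _) fun b hb => (Finset.mem_filter.mp hb).2
  set q := Real.sqrt (Real.log (Real.log N))
  have hq : 0 ≤ q := Real.sqrt_nonneg _
  have hN0 : (0 : ℝ) ≤ N := Nat.cast_nonneg N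
  by_cases hbig : 8 * Real.log K ≤ q
  · refine hbound.trans ?_
    have hc : 1 / (16 * Real.log K + 16) * q ≤ q / 8 := by
      rw [one_div_mul_eq_div]
      exact div_le_div_of_nonneg_left hq (by norm_num) (by linarith)
    have h : K * Real.exp (-(q / 4)) ≤ Real.exp (-(1 / (16 * Real.log K + 16)) * q) := by
      calc K * Real.exp (-(q / 4)) = Real.exp (Real.log K + -(q / 4)) := by
            rw [Real.exp_add, hKe]
        _ ≤ _ := Real.exp_le_exp.mpr (by linarith)
    calc _ = 2 * N * (K * Real.exp (-(q / 4))) := by ring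
      _ ≤ _ := by gcongr
  · -- Here the exponential is at least `1 / 2`, so the trivial bound `N` suffices.
    have hc : 1 / (16 * Real.log K + 16) * q ≤ 1 / 2 := by
      rw [one_div_mul_eq_div, div_le_iff₀ hκ']
      linarith
    have h := Real.add_one_le_exp (-(1 / (16 * Real.log K + 16)) * q)
    have hcard : ((Finset.Icc 1 N).filter fun b =>
        |(b.primeFactors.card : ℝ) - Real.log (Real.log N)| >
          (Real.log (Real.log N)) ^ ((3 : ℝ) / 4)).card ≤ N :=
      (Finset.card_filter_le _ _).trans (by simp)
    refine (Nat.cast_le.mpr hcard).trans ?_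
    nlinarith
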